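/- There is a family of first-order sequents {S_i}_{i<ω} and LK-proofs thereof such that: (1) the size of S_i is polynomial in i; (2) there is no elementary function of i bounding the size of the smallest cut-free LK-proofs of S_i; and (3) the size of the given LK-proofs of S_i (which contain cuts) is polynomially bounded in i. -/

import Mathlib

namespace EpsCalc

/-! ## Syntax: terms and formulas of first-order logic extended by epsilon terms.
We use a locally nameless representation: `bvar` are de Bruijn indices for bound
variables (bound by `all`, `ex`, or `eps`), `fvar` are named free variables. -/

mutual
inductive Tm : Type where
  | bvar : ℕ → Tm
  | fvar : ℕ → Tm
  | func : ℕ → Tms → Tm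
  | eps  : Fm → Tm          -- the epsilon term ε_x A(x)

inductive Tms : Type where
  | nil  : Tms
  | cons : Tm → Tms → Tms

inductive Fm : Type where
  | atom : ℕ → Tms → Fm
  | and  : Fm → Fm → Fm
  | or   : Fm → Fm → Fm
  | imp  : Fm → Fm → Fm
  | not  : Fm → Fm
  | all  : Fm → Fm          -- ∀ binding de Bruijn index 0
  | ex   : Fm → Fm          -- ∃ binding de Bruijn index 0
end

/-! lifting of bound variables (shift indices ≥ k by one) -/
mutual
def liftT (k : ℕ) : Tm → Tm
  | .bvar n => if n < k then .bvar n else .bvar (n+1)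
  | .fvar a => .fvar a
  | .func f ts => .func f (liftTs k ts)
  | .eps A => .eps (liftF (k+1) A)
def liftTs (k : ℕ) : Tms → Tms
  | .nil => .nil
  | .cons t ts => .cons (liftT k t) (liftTs k ts)
def liftF (k : ℕ) : Fm → Fm
  | .atom p ts => .atom p (liftTs k ts)
  | .and A B => .and (liftF k A) (liftF k B)
  | .or A B => .or (liftF k A) (liftF k B)
  | .imp A B => .imp (liftF k A) (liftF k B)
  | .not A => .not (liftF k A)
  | .all A => .all (liftF (k+1) A)
  | .ex A => .ex (liftF (k+1) A)
end

/-! substitution of a term for the bound variable k -/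
mutual
def subT (k : ℕ) (u : Tm) : Tm → Tm
  | .bvar n => if n = k then u else if n < k then .bvar n else .bvar (n-1)
  | .fvar a => .fvar a
  | .func f ts => .func f (subTs k u ts)
  | .eps A => .eps (subF (k+1) (liftT 0 u) A)
def subTs (k : ℕ) (u : Tm) : Tms → Tms
  | .nil => .nil
  | .cons t ts => .cons (subT k u t) (subTs k u ts)
def subF (k : ℕ) (u : Tm) : Fm → Fm
  | .atom p ts => .atom p (subTs k u ts)
  | .and A B => .and (subF k u A) (subF k u B)
  | .or A B => .or (subF k u A) (subF k u B)
  | .imp A B => .imp (subF k u A) (subF k u B)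
  | .not A => .not (subF k u A)
  | .all A => .all (subF (k+1) (liftT 0 u) A)
  | .ex A => .ex (subF (k+1) (liftT 0 u) A)
end

/-- instantiate the outermost bound variable of `A` with the term `t`:  A(t) -/
def inst0 (A : Fm) (t : Tm) : Fm := subF 0 t A

/-! substitution of a term for a *free* variable -/
mutual
def sfvT (a : ℕ) (u : Tm) : Tm → Tm
  | .bvar n => .bvar n
  | .fvar b => if b = a then u else .fvar b
  | .func f ts => .func f (sfvTs a u ts)
  | .eps A => .eps (sfvF a (liftT 0 u) A)
def sfvTs (a : ℕ) (u : Tm) : Tms → Tms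
  | .nil => .nil
  | .cons t ts => .cons (sfvT a u t) (sfvTs a u ts)
def sfvF (a : ℕ) (u : Tm) : Fm → Fm
  | .atom p ts => .atom p (sfvTs a u ts)
  | .and A B => .and (sfvF a u A) (sfvF a u B)
  | .or A B => .or (sfvF a u A) (sfvF a u B)
  | .imp A B => .imp (sfvF a u A) (sfvF a u B)
  | .not A => .not (sfvF a u A)
  | .all A => .all (sfvF a (liftT 0 u) A)
  | .ex A => .ex (sfvF a (liftT 0 u) A)
end

/-! abstraction of a free variable into a bound variable (for universal closure) -/
mutual
def abT (a k : ℕ) : Tm → Tm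
  | .bvar n => .bvar n
  | .fvar b => if b = a then .bvar k else .fvar b
  | .func f ts => .func f (abTs a k ts)
  | .eps A => .eps (abF a (k+1) A)
def abTs (a k : ℕ) : Tms → Tms
  | .nil => .nil
  | .cons t ts => .cons (abT a k t) (abTs a k ts)
def abF (a k : ℕ) : Fm → Fm
  | .atom p ts => .atom p (abTs a k ts)
  | .and A B => .and (abF a k A) (abF a k B)
  | .or A B => .or (abF a k A) (abF a k B)
  | .imp A B => .imp (abF a k A) (abF a k B)
  | .not A => .not (abF a k A)
  | .all A => .all (abF a (k+1) A)
  | .ex A => .ex (abF a (k+1) A)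
end

/-! free variables -/
mutual
def fvT : Tm → List ℕ
  | .bvar _ => []
  | .fvar a => [a]
  | .func _ ts => fvTs ts
  | .eps A => fvF A
def fvTs : Tms → List ℕ
  | .nil => []
  | .cons t ts => fvT t ++ fvTs ts
def fvF : Fm → List ℕ
  | .atom _ ts => fvTs ts
  | .and A B => fvF A ++ fvF B
  | .or A B => fvF A ++ fvF B
  | .imp A B => fvF A ++ fvF B
  | .not A => fvF A
  | .all A => fvF A
  | .ex A => fvF A
end

/-! function symbols occurring in an expression -/
mutual
def fsT : Tm → List ℕ
  | .bvar _ => []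
  | .fvar _ => []
  | .func f ts => f :: fsTs ts
  | .eps A => fsF A
def fsTs : Tms → List ℕ
  | .nil => []
  | .cons t ts => fsT t ++ fsTs ts
def fsF : Fm → List ℕ
  | .atom _ ts => fsTs ts
  | .and A B => fsF A ++ fsF B
  | .or A B => fsF A ++ fsF B
  | .imp A B => fsF A ++ fsF B
  | .not A => fsF A
  | .all A => fsF A
  | .ex A => fsF A
end

/-! number of symbols (size) -/
mutual
def szT : Tm → ℕ
  | .bvar _ => 1
  | .fvar _ => 1
  | .func _ ts => 1 + szTs ts
  | .eps A => 1 + szF A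
def szTs : Tms → ℕ
  | .nil => 0
  | .cons t ts => szT t + szTs ts
def szF : Fm → ℕ
  | .atom _ ts => 1 + szTs ts
  | .and A B => 1 + szF A + szF B
  | .or A B => 1 + szF A + szF B
  | .imp A B => 1 + szF A + szF B
  | .not A => 1 + szF A
  | .all A => 1 + szF A
  | .ex A => 1 + szF A
end

/-! epsilon-freeness (first-order language) and quantifier-freeness (epsilon language) -/
mutual
def noEpsT : Tm → Bool
  | .bvar _ => true
  | .fvar _ => true
  | .func _ ts => noEpsTs ts
  | .eps _ => false
def noEpsTs : Tms → Bool
  | .nil => true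
  | .cons t ts => noEpsT t && noEpsTs ts
def noEpsF : Fm → Bool
  | .atom _ ts => noEpsTs ts
  | .and A B => noEpsF A && noEpsF B
  | .or A B => noEpsF A && noEpsF B
  | .imp A B => noEpsF A && noEpsF B
  | .not A => noEpsF A
  | .all A => noEpsF A
  | .ex A => noEpsF A
end

/-- `A` is a formula of the first-order language: it contains no epsilon terms. -/
def isFO (A : Fm) : Bool := noEpsF A

/-- quantifier-freeness: `A` belongs to the language of the epsilon calculus
(propositional language over epsilon terms) iff `qfree A`. -/
def qfree : Fm → Bool
  | .atom _ _ => true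
  | .and A B => qfree A && qfree B
  | .or A B => qfree A && qfree B
  | .imp A B => qfree A && qfree B
  | .not A => qfree A
  | .all _ => false
  | .ex _ => false

/-- The epsilon translation [A]^ε of a formula. -/
def epsT : Fm → Fm
  | .atom p ts => .atom p ts
  | .and A B => .and (epsT A) (epsT B)
  | .or A B => .or (epsT A) (epsT B)
  | .imp A B => .imp (epsT A) (epsT B)
  | .not A => .not (epsT A)
  | .ex A => inst0 (epsT A) (.eps (epsT A))
  | .all A => inst0 (epsT A) (.eps (.not (epsT A)))

/-! ## The matrix A^M of a formula: delete all quantifiers and replace the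
variables bound by them by fresh free variables. -/
mutual
def mxT (b d : ℕ) : Tm → Tm
  | .bvar n => if n < d then .fvar (b + (d - 1 - n)) else .bvar (n - d)
  | .fvar a => .fvar a
  | .func f ts => .func f (mxTs b d ts)
  | .eps A => .eps A          -- (the matrix is only used on epsilon-free formulas)
def mxTs (b d : ℕ) : Tms → Tms
  | .nil => .nil
  | .cons t ts => .cons (mxT b d t) (mxTs b d ts)
def mxF (b d : ℕ) : Fm → Fm
  | .atom p ts => .atom p (mxTs b d ts)
  | .and A B => .and (mxF b d A) (mxF b d B)
  | .or A B => .or (mxF b d A) (mxF b d B)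
  | .imp A B => .imp (mxF b d A) (mxF b d B)
  | .not A => .not (mxF b d A)
  | .all A => mxF b (d+1) A
  | .ex A => mxF b (d+1) A
end

def maxFv (A : Fm) : ℕ := (fvF A).foldr max 0

/-- the matrix A^M of A -/
def matrix (A : Fm) : Fm := mxF (maxFv A + 1) 0 A

/-- universal closure ∀x̄ A over all free variables of A -/
def uclose (A : Fm) : Fm :=
  ((fvF A).dedup).foldr (fun a B => Fm.all (abF a 0 B)) A

/-! ## Weak/strong quantifier occurrences.
`posW A` : all quantifier occurrences of `A` are weak when `A` occurs in the
succedent; `negW A` : likewise for the antecedent. -/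
mutual
def posW : Fm → Bool
  | .atom _ _ => true
  | .and A B => posW A && posW B
  | .or A B => posW A && posW B
  | .imp A B => negW A && posW B
  | .not A => negW A
  | .all _ => false
  | .ex A => posW A
def negW : Fm → Bool
  | .atom _ _ => true
  | .and A B => negW A && negW B
  | .or A B => negW A && negW B
  | .imp A B => posW A && negW B
  | .not A => posW A
  | .all A => negW A
  | .ex _ => false
end

/-- the sequent Γ ⊢ Δ contains weak quantifier occurrences only -/
def WeakSeq (Γ Δ : List Fm) : Prop :=
  (∀ A ∈ Γ, negW A = true) ∧ (∀ A ∈ Δ, posW A = true)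

/-- the sequent Γ ⊢ Δ is in the first-order language -/
def FOSeq (Γ Δ : List Fm) : Prop :=
  (∀ A ∈ Γ, isFO A = true) ∧ (∀ A ∈ Δ, isFO A = true)

/-- the sequent Γ ⊢ Δ is in the language of the epsilon calculus -/
def EpsSeq (Γ Δ : List Fm) : Prop :=
  (∀ A ∈ Γ, qfree A = true) ∧ (∀ A ∈ Δ, qfree A = true)

def fvSeq (Γ Δ : List Fm) : List ℕ :=
  (Γ ++ Δ).foldr (fun A l => fvF A ++ l) []

def fsSeq (Γ Δ : List Fm) : List ℕ :=
  (Γ ++ Δ).foldr (fun A l => fsF A ++ l) []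

def seqSize (Γ Δ : List Fm) : ℕ :=
  (Γ ++ Δ).foldr (fun A n => szF A + n) 0


/-! ## LK derivation trees.
`Deriv Γ Δ` are derivation trees of the sequent Γ ⊢ Δ built from the rules of
Gentzen's LK, where the strong quantifier rules `allR`/`exL` carry an
eigenvariable but *no* correctness condition; the various eigenvariable
disciplines (LK, LK⁺, LK⁺⁺) are imposed as predicates on the trees below. -/
inductive Deriv : List Fm → List Fm → Type where
  | ax (A : Fm) : Deriv [A] [A]
  | andL (A B : Fm) (Γ Δ : List Fm) :
      Deriv (A :: B :: Γ) Δ → Deriv (Fm.and A B :: Γ) Δ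
  | andR (A B : Fm) (Γ₁ Δ₁ Γ₂ Δ₂ : List Fm) :
      Deriv Γ₁ (A :: Δ₁) → Deriv Γ₂ (B :: Δ₂) →
      Deriv (Γ₁ ++ Γ₂) (Fm.and A B :: (Δ₁ ++ Δ₂))
  | orL (A B : Fm) (Γ₁ Δ₁ Γ₂ Δ₂ : List Fm) :
      Deriv (A :: Γ₁) Δ₁ → Deriv (B :: Γ₂) Δ₂ →
      Deriv (Fm.or A B :: (Γ₁ ++ Γ₂)) (Δ₁ ++ Δ₂)
  | orR (A B : Fm) (Γ Δ : List Fm) :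
      Deriv Γ (A :: B :: Δ) → Deriv Γ (Fm.or A B :: Δ)
  | impL (A B : Fm) (Γ₁ Δ₁ Γ₂ Δ₂ : List Fm) :
      Deriv Γ₁ (A :: Δ₁) → Deriv (B :: Γ₂) Δ₂ →
      Deriv (Fm.imp A B :: (Γ₁ ++ Γ₂)) (Δ₁ ++ Δ₂)
  | impR (A B : Fm) (Γ Δ : List Fm) :
      Deriv (A :: Γ) (B :: Δ) → Deriv Γ (Fm.imp A B :: Δ)
  | notL (A : Fm) (Γ Δ : List Fm) :
      Deriv Γ (A :: Δ) → Deriv (Fm.not A :: Γ) Δ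
  | notR (A : Fm) (Γ Δ : List Fm) :
      Deriv (A :: Γ) Δ → Deriv Γ (Fm.not A :: Δ)
  | wL (A : Fm) (Γ Δ : List Fm) : Deriv Γ Δ → Deriv (A :: Γ) Δ
  | wR (A : Fm) (Γ Δ : List Fm) : Deriv Γ Δ → Deriv Γ (A :: Δ)
  | cL (A : Fm) (Γ Δ : List Fm) : Deriv (A :: A :: Γ) Δ → Deriv (A :: Γ) Δ
  | cR (A : Fm) (Γ Δ : List Fm) : Deriv Γ (A :: A :: Δ) → Deriv Γ (A :: Δ)
  | cut (A : Fm) (Γ₁ Δ₁ Γ₂ Δ₂ : List Fm) :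
      Deriv Γ₁ (A :: Δ₁) → Deriv (A :: Γ₂) Δ₂ →
      Deriv (Γ₁ ++ Γ₂) (Δ₁ ++ Δ₂)
  | allL (t : Tm) (A : Fm) (Γ Δ : List Fm) :
      Deriv (inst0 A t :: Γ) Δ → Deriv (Fm.all A :: Γ) Δ
  | allR (a : ℕ) (A : Fm) (Γ Δ : List Fm) :
      Deriv Γ (inst0 A (Tm.fvar a) :: Δ) → Deriv Γ (Fm.all A :: Δ)
  | exL (a : ℕ) (A : Fm) (Γ Δ : List Fm) :
      Deriv (inst0 A (Tm.fvar a) :: Γ) Δ → Deriv (Fm.ex A :: Γ) Δ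
  | exR (t : Tm) (A : Fm) (Γ Δ : List Fm) :
      Deriv Γ (inst0 A t :: Δ) → Deriv Γ (Fm.ex A :: Δ)
  | permL (Γ Γ' Δ : List Fm) : Γ.Perm Γ' → Deriv Γ Δ → Deriv Γ' Δ
  | permR (Γ Δ Δ' : List Fm) : Δ.Perm Δ' → Deriv Γ Δ → Deriv Γ Δ'

namespace Deriv

/-- the size of a derivation: the number of inference steps occurring in it -/
def size : ∀ {Γ Δ}, Deriv Γ Δ → ℕ
  | _, _, ax _ => 1
  | _, _, andL _ _ _ _ d => d.size + 1
  | _, _, andR _ _ _ _ _ _ d e => d.size + e.size + 1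
  | _, _, orL _ _ _ _ _ _ d e => d.size + e.size + 1
  | _, _, orR _ _ _ _ d => d.size + 1
  | _, _, impL _ _ _ _ _ _ d e => d.size + e.size + 1
  | _, _, impR _ _ _ _ d => d.size + 1
  | _, _, notL _ _ _ d => d.size + 1
  | _, _, notR _ _ _ d => d.size + 1
  | _, _, wL _ _ _ d => d.size + 1
  | _, _, wR _ _ _ d => d.size + 1
  | _, _, cL _ _ _ d => d.size + 1
  | _, _, cR _ _ _ d => d.size + 1
  | _, _, cut _ _ _ _ _ d e => d.size + e.size + 1
  | _, _, allL _ _ _ _ d => d.size + 1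
  | _, _, allR _ _ _ _ d => d.size + 1
  | _, _, exL _ _ _ _ d => d.size + 1
  | _, _, exR _ _ _ _ d => d.size + 1
  | _, _, permL _ _ _ _ d => d.size + 1
  | _, _, permR _ _ _ _ d => d.size + 1

/-- the list of cut formulas occurring in a derivation -/
def cutFms : ∀ {Γ Δ}, Deriv Γ Δ → List Fm
  | _, _, ax _ => []
  | _, _, andL _ _ _ _ d => d.cutFms
  | _, _, andR _ _ _ _ _ _ d e => d.cutFms ++ e.cutFms
  | _, _, orL _ _ _ _ _ _ d e => d.cutFms ++ e.cutFms
  | _, _, orR _ _ _ _ d => d.cutFms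
  | _, _, impL _ _ _ _ _ _ d e => d.cutFms ++ e.cutFms
  | _, _, impR _ _ _ _ d => d.cutFms
  | _, _, notL _ _ _ d => d.cutFms
  | _, _, notR _ _ _ d => d.cutFms
  | _, _, wL _ _ _ d => d.cutFms
  | _, _, wR _ _ _ d => d.cutFms
  | _, _, cL _ _ _ d => d.cutFms
  | _, _, cR _ _ _ d => d.cutFms
  | _, _, cut A _ _ _ _ d e => A :: (d.cutFms ++ e.cutFms)
  | _, _, allL _ _ _ _ d => d.cutFms
  | _, _, allR _ _ _ _ d => d.cutFms
  | _, _, exL _ _ _ _ d => d.cutFms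
  | _, _, exR _ _ _ _ d => d.cutFms
  | _, _, permL _ _ _ _ d => d.cutFms
  | _, _, permR _ _ _ _ d => d.cutFms

/-- data of the strong quantifier inferences of a derivation:
(eigenvariable, auxiliary formula, main formula) -/
def strongs : ∀ {Γ Δ}, Deriv Γ Δ → List (ℕ × Fm × Fm)
  | _, _, ax _ => []
  | _, _, andL _ _ _ _ d => d.strongs
  | _, _, andR _ _ _ _ _ _ d e => d.strongs ++ e.strongs
  | _, _, orL _ _ _ _ _ _ d e => d.strongs ++ e.strongs
  | _, _, orR _ _ _ _ d => d.strongs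
  | _, _, impL _ _ _ _ _ _ d e => d.strongs ++ e.strongs
  | _, _, impR _ _ _ _ d => d.strongs
  | _, _, notL _ _ _ d => d.strongs
  | _, _, notR _ _ _ d => d.strongs
  | _, _, wL _ _ _ d => d.strongs
  | _, _, wR _ _ _ d => d.strongs
  | _, _, cL _ _ _ d => d.strongs
  | _, _, cR _ _ _ d => d.strongs
  | _, _, cut _ _ _ _ _ d e => d.strongs ++ e.strongs
  | _, _, allL _ _ _ _ d => d.strongs
  | _, _, allR a A _ _ d => (a, inst0 A (Tm.fvar a), Fm.all A) :: d.strongs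
  | _, _, exL a A _ _ d => (a, inst0 A (Tm.fvar a), Fm.ex A) :: d.strongs
  | _, _, exR _ _ _ _ d => d.strongs
  | _, _, permL _ _ _ _ d => d.strongs
  | _, _, permR _ _ _ _ d => d.strongs

/-- the standard (local) eigenvariable conditions of LK: the eigenvariable of a
strong quantifier inference does not occur free in its conclusion -/
def Std : ∀ {Γ Δ}, Deriv Γ Δ → Prop
  | _, _, ax _ => True
  | _, _, andL _ _ _ _ d => d.Std
  | _, _, andR _ _ _ _ _ _ d e => d.Std ∧ e.Std
  | _, _, orL _ _ _ _ _ _ d e => d.Std ∧ e.Std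
  | _, _, orR _ _ _ _ d => d.Std
  | _, _, impL _ _ _ _ _ _ d e => d.Std ∧ e.Std
  | _, _, impR _ _ _ _ d => d.Std
  | _, _, notL _ _ _ d => d.Std
  | _, _, notR _ _ _ d => d.Std
  | _, _, wL _ _ _ d => d.Std
  | _, _, wR _ _ _ d => d.Std
  | _, _, cL _ _ _ d => d.Std
  | _, _, cR _ _ _ d => d.Std
  | _, _, cut _ _ _ _ _ d e => d.Std ∧ e.Std
  | _, _, allL _ _ _ _ d => d.Std
  | _, _, allR a A Γ Δ d => a ∉ fvSeq Γ (Fm.all A :: Δ) ∧ d.Std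
  | _, _, exL a A Γ Δ d => a ∉ fvSeq (Fm.ex A :: Γ) Δ ∧ d.Std
  | _, _, exR _ _ _ _ d => d.Std
  | _, _, permL _ _ _ _ d => d.Std
  | _, _, permR _ _ _ _ d => d.Std

end Deriv

/-- the side variable relation `<_φ`: `b` is a side variable of `a` in `φ` if `φ`
contains a strong quantifier inference with eigenvariable `a` whose auxiliary
formula contains the free variable `b` -/
def sideRel {Γ Δ} (d : Deriv Γ Δ) (a b : ℕ) : Prop :=
  ∃ e ∈ d.strongs, e.1 = a ∧ b ∈ fvF e.2.1 ∧ b ≠ a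

/-- acyclicity of a binary relation -/
def Acyc (r : ℕ → ℕ → Prop) : Prop := ∀ x, ¬ Relation.TransGen r x x

/-- LK⁺-suitability of (all strong quantifier inferences of) a derivation:
substitutability, the side variable condition, and weak regularity. -/
def SuitP {Γ Δ} (d : Deriv Γ Δ) : Prop :=
  (∀ e ∈ d.strongs, e.1 ∉ fvSeq Γ Δ) ∧
  Acyc (sideRel d) ∧
  (d.strongs.map (·.1)).Nodup

/-- LK⁺⁺-suitability: substitutability, the side variable condition, and very
weak regularity (equal eigenvariables only for equal main formulas). -/
def SuitPP {Γ Δ} (d : Deriv Γ Δ) : Prop :=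
  (∀ e ∈ d.strongs, e.1 ∉ fvSeq Γ Δ) ∧
  Acyc (sideRel d) ∧
  (∀ e₁ ∈ d.strongs, ∀ e₂ ∈ d.strongs, e₁.1 = e₂.1 → e₁.2.2 = e₂.2.2)

/-! ## The sequent calculus Lε of the epsilon calculus:
atomic axioms, the propositional, structural and cut rules of LK, the weak
quantifier rules ∃_r and ∀_l producing epsilon terms, and a substitution rule
replacing the strong quantifier inferences. -/
inductive EDeriv : List Fm → List Fm → Type where
  | ax (p : ℕ) (ts : Tms) : EDeriv [Fm.atom p ts] [Fm.atom p ts]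
  | andL (A B : Fm) (Γ Δ : List Fm) :
      EDeriv (A :: B :: Γ) Δ → EDeriv (Fm.and A B :: Γ) Δ
  | andR (A B : Fm) (Γ₁ Δ₁ Γ₂ Δ₂ : List Fm) :
      EDeriv Γ₁ (A :: Δ₁) → EDeriv Γ₂ (B :: Δ₂) →
      EDeriv (Γ₁ ++ Γ₂) (Fm.and A B :: (Δ₁ ++ Δ₂))
  | orL (A B : Fm) (Γ₁ Δ₁ Γ₂ Δ₂ : List Fm) :
      EDeriv (A :: Γ₁) Δ₁ → EDeriv (B :: Γ₂) Δ₂ →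
      EDeriv (Fm.or A B :: (Γ₁ ++ Γ₂)) (Δ₁ ++ Δ₂)
  | orR (A B : Fm) (Γ Δ : List Fm) :
      EDeriv Γ (A :: B :: Δ) → EDeriv Γ (Fm.or A B :: Δ)
  | impL (A B : Fm) (Γ₁ Δ₁ Γ₂ Δ₂ : List Fm) :
      EDeriv Γ₁ (A :: Δ₁) → EDeriv (B :: Γ₂) Δ₂ →
      EDeriv (Fm.imp A B :: (Γ₁ ++ Γ₂)) (Δ₁ ++ Δ₂)
  | impR (A B : Fm) (Γ Δ : List Fm) :
      EDeriv (A :: Γ) (B :: Δ) → EDeriv Γ (Fm.imp A B :: Δ)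
  | notL (A : Fm) (Γ Δ : List Fm) :
      EDeriv Γ (A :: Δ) → EDeriv (Fm.not A :: Γ) Δ
  | notR (A : Fm) (Γ Δ : List Fm) :
      EDeriv (A :: Γ) Δ → EDeriv Γ (Fm.not A :: Δ)
  | wL (A : Fm) (Γ Δ : List Fm) : EDeriv Γ Δ → EDeriv (A :: Γ) Δ
  | wR (A : Fm) (Γ Δ : List Fm) : EDeriv Γ Δ → EDeriv Γ (A :: Δ)
  | cL (A : Fm) (Γ Δ : List Fm) : EDeriv (A :: A :: Γ) Δ → EDeriv (A :: Γ) Δ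
  | cR (A : Fm) (Γ Δ : List Fm) : EDeriv Γ (A :: A :: Δ) → EDeriv Γ (A :: Δ)
  | cut (A : Fm) (Γ₁ Δ₁ Γ₂ Δ₂ : List Fm) :
      EDeriv Γ₁ (A :: Δ₁) → EDeriv (A :: Γ₂) Δ₂ →
      EDeriv (Γ₁ ++ Γ₂) (Δ₁ ++ Δ₂)
  | allL (t : Tm) (A : Fm) (Γ Δ : List Fm) :
      EDeriv (inst0 A t :: Γ) Δ →
      EDeriv (inst0 A (Tm.eps (Fm.not A)) :: Γ) Δ
  | exR (t : Tm) (A : Fm) (Γ Δ : List Fm) :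
      EDeriv Γ (inst0 A t :: Δ) →
      EDeriv Γ (inst0 A (Tm.eps A) :: Δ)
  | subst (a : ℕ) (t : Tm) (Γ Δ : List Fm) :
      EDeriv Γ Δ → EDeriv (Γ.map (sfvF a t)) (Δ.map (sfvF a t))
  | permL (Γ Γ' Δ : List Fm) : Γ.Perm Γ' → EDeriv Γ Δ → EDeriv Γ' Δ
  | permR (Γ Δ Δ' : List Fm) : Δ.Perm Δ' → EDeriv Γ Δ → EDeriv Γ Δ'

namespace EDeriv

/-- the size of an Lε derivation -/
def size : ∀ {Γ Δ}, EDeriv Γ Δ → ℕ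
  | _, _, ax _ _ => 1
  | _, _, andL _ _ _ _ d => d.size + 1
  | _, _, andR _ _ _ _ _ _ d e => d.size + e.size + 1
  | _, _, orL _ _ _ _ _ _ d e => d.size + e.size + 1
  | _, _, orR _ _ _ _ d => d.size + 1
  | _, _, impL _ _ _ _ _ _ d e => d.size + e.size + 1
  | _, _, impR _ _ _ _ d => d.size + 1
  | _, _, notL _ _ _ d => d.size + 1
  | _, _, notR _ _ _ d => d.size + 1
  | _, _, wL _ _ _ d => d.size + 1
  | _, _, wR _ _ _ d => d.size + 1
  | _, _, cL _ _ _ d => d.size + 1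
  | _, _, cR _ _ _ d => d.size + 1
  | _, _, cut _ _ _ _ _ d e => d.size + e.size + 1
  | _, _, allL _ _ _ _ d => d.size + 1
  | _, _, exR _ _ _ _ d => d.size + 1
  | _, _, subst _ _ _ _ d => d.size + 1
  | _, _, permL _ _ _ _ d => d.size + 1
  | _, _, permR _ _ _ _ d => d.size + 1

/-- the list of cut formulas occurring in an Lε derivation -/
def cutFms : ∀ {Γ Δ}, EDeriv Γ Δ → List Fm
  | _, _, ax _ _ => []
  | _, _, andL _ _ _ _ d => d.cutFms
  | _, _, andR _ _ _ _ _ _ d e => d.cutFms ++ e.cutFms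
  | _, _, orL _ _ _ _ _ _ d e => d.cutFms ++ e.cutFms
  | _, _, orR _ _ _ _ d => d.cutFms
  | _, _, impL _ _ _ _ _ _ d e => d.cutFms ++ e.cutFms
  | _, _, impR _ _ _ _ d => d.cutFms
  | _, _, notL _ _ _ d => d.cutFms
  | _, _, notR _ _ _ d => d.cutFms
  | _, _, wL _ _ _ d => d.cutFms
  | _, _, wR _ _ _ d => d.cutFms
  | _, _, cL _ _ _ d => d.cutFms
  | _, _, cR _ _ _ d => d.cutFms
  | _, _, cut A _ _ _ _ d e => A :: (d.cutFms ++ e.cutFms)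
  | _, _, allL _ _ _ _ d => d.cutFms
  | _, _, exR _ _ _ _ d => d.cutFms
  | _, _, subst _ _ _ _ d => d.cutFms
  | _, _, permL _ _ _ _ d => d.cutFms
  | _, _, permR _ _ _ _ d => d.cutFms

end EDeriv

/-! ## Elementary functions and polynomial bounds -/

/-- `iterExp k n` is the `k`-fold iterated exponential 2^2^...^n. -/
def iterExp : ℕ → ℕ → ℕ
  | 0, n => n
  | k+1, n => 2 ^ iterExp k n

/-- A function ℕ → ℕ is elementary (in the sense of Kalmár: definable by a
quantifier-free formula from +, ×, and x ↦ 2^x) iff it is majorized by some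
fixed iterated exponential; we use this growth-rate characterization. -/
def IsElementary (f : ℕ → ℕ) : Prop := ∃ k, ∀ n, f n ≤ iterExp k n

/-- `g` is polynomially bounded -/
def PolyBdd (g : ℕ → ℕ) : Prop := ∃ p : Polynomial ℕ, ∀ n, g n ≤ p.eval n

/-! ## Skolemization (relationally): `SkP F A B` (`SkN F A B`) holds if `B` is
obtained from `A`, occurring in the succedent (antecedent), by replacing the
strong quantifiers by terms built from fresh function symbols in `F`. -/
mutual
inductive SkP (F : ℕ → Prop) : Fm → Fm → Prop where
  | atom (p ts) : SkP F (Fm.atom p ts) (Fm.atom p ts)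
  | and {A A' B B'} : SkP F A A' → SkP F B B' → SkP F (Fm.and A B) (Fm.and A' B')
  | or {A A' B B'} : SkP F A A' → SkP F B B' → SkP F (Fm.or A B) (Fm.or A' B')
  | imp {A A' B B'} : SkN F A A' → SkP F B B' → SkP F (Fm.imp A B) (Fm.imp A' B')
  | not {A A'} : SkN F A A' → SkP F (Fm.not A) (Fm.not A')
  | ex {A A'} : SkP F A A' → SkP F (Fm.ex A) (Fm.ex A')
  | all {A B} (f : ℕ) (ts : Tms) : F f →
      SkP F (inst0 A (Tm.func f ts)) B → SkP F (Fm.all A) B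
inductive SkN (F : ℕ → Prop) : Fm → Fm → Prop where
  | atom (p ts) : SkN F (Fm.atom p ts) (Fm.atom p ts)
  | and {A A' B B'} : SkN F A A' → SkN F B B' → SkN F (Fm.and A B) (Fm.and A' B')
  | or {A A' B B'} : SkN F A A' → SkN F B B' → SkN F (Fm.or A B) (Fm.or A' B')
  | imp {A A' B B'} : SkP F A A' → SkN F B B' → SkN F (Fm.imp A B) (Fm.imp A' B')
  | not {A A'} : SkP F A A' → SkN F (Fm.not A) (Fm.not A')
  | all {A A'} : SkN F A A' → SkN F (Fm.all A) (Fm.all A')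
  | ex {A B} (f : ℕ) (ts : Tms) : F f →
      SkN F (inst0 A (Tm.func f ts)) B → SkN F (Fm.ex A) B
end

/-- `S'` is a Skolemization of the sequent `S` using fresh function symbols from `F` -/
def SkolemSeq (F : ℕ → Prop) (S S' : List Fm × List Fm) : Prop :=
  List.Forall₂ (SkN F) S.1 S'.1 ∧ List.Forall₂ (SkP F) S.2 S'.2

/-!
The sequent `S i` says that the recursion equations of `y + 2 ^ x` imply the existence of a tower
of `i` exponentials.

With cuts, one uses Solovay's initial segments: `A_{i+1}(y)` says that `A_i` is closed under
`x ↦ x + 2 ^ y`. Each `A_i` contains `0` and is closed under successor, with proofs of constant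
size because `2 ^ (y + 1) = 2 ^ y + 2 ^ y`, and `A_{i+1}(y)` puts `2 ^ y` into `A_i`. Hence `i` cuts
climb the tower.

A cut-free proof of `S i` contains no strong quantifier inference, so all its steps remain sound
when the quantifiers range only over the terms instantiated in it. If there are fewer of these than
the value of the tower, some number `m` below that value is denoted by none of them.
Declaring `y + 2 ^ x = z` false whenever it would jump over `m`, from `y ≤ m` to `z > m`, preserves
the recursion equations on the instantiated terms, since the successor steps never start at `m`;
but no tower starting from `0` gets past `m`, which refutes `S i`.
-/

/-! ### Soundness over a restricted domain -/

/-- The number of connectives and quantifiers of a formula. Unlike the size it does not change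
when a quantifier is instantiated. -/
def Fm.degree : Fm → ℕ
  | .atom _ _ => 0
  | .and A B | .or A B | .imp A B => A.degree + B.degree + 1
  | .not A | .all A | .ex A => A.degree + 1

theorem Fm.degree_subF (k : ℕ) (u : Tm) : ∀ A : Fm, (subF k u A).degree = A.degree
  | .atom _ _ => rfl
  | .and A B | .or A B | .imp A B => by
    simp only [subF, degree, degree_subF k u A, degree_subF k u B]
  | .not A => by simp only [subF, degree, degree_subF k u A]
  | .all A | .ex A => by simp only [subF, degree, degree_subF (k + 1) (liftT 0 u) A]

/-- Truth of `A` when the atomic formulas are interpreted by `v` and the quantifiers range over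
the terms in `U` only. No domain is interpreted: terms stand for themselves. -/
def Holds (v : ℕ → Tms → Prop) (U : Set Tm) : Fm → Prop
  | .atom p ts => v p ts
  | .and A B => Holds v U A ∧ Holds v U B
  | .or A B => Holds v U A ∨ Holds v U B
  | .imp A B => Holds v U A → Holds v U B
  | .not A => ¬ Holds v U A
  | .all A => ∀ t ∈ U, Holds v U (inst0 A t)
  | .ex A => ∃ t ∈ U, Holds v U (inst0 A t)
termination_by A => A.degree
decreasing_by all_goals simp only [inst0, Fm.degree_subF, Fm.degree]; omega

/-- Truth of the sequent `Γ ⊢ Δ` in the sense of `Holds`. -/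
def HoldsSeq (v : ℕ → Tms → Prop) (U : Set Tm) (Γ Δ : List Fm) : Prop :=
  (∀ A ∈ Γ, Holds v U A) → ∃ A ∈ Δ, Holds v U A

/-- The terms instantiating the weak quantifier inferences of a derivation. -/
def Deriv.witnesses : ∀ {Γ Δ : List Fm}, Deriv Γ Δ → List Tm
  | _, _, ax _ => []
  | _, _, andR _ _ _ _ _ _ d e | _, _, orL _ _ _ _ _ _ d e | _, _, impL _ _ _ _ _ _ d e
  | _, _, cut _ _ _ _ _ d e => d.witnesses ++ e.witnesses
  | _, _, allL t _ _ _ d | _, _, exR t _ _ _ d => t :: d.witnesses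
  | _, _, andL _ _ _ _ d | _, _, orR _ _ _ _ d | _, _, impR _ _ _ _ d | _, _, notL _ _ _ d
  | _, _, notR _ _ _ d | _, _, wL _ _ _ d | _, _, wR _ _ _ d | _, _, cL _ _ _ d
  | _, _, cR _ _ _ d | _, _, allR _ _ _ _ d | _, _, exL _ _ _ _ d | _, _, permL _ _ _ _ d
  | _, _, permR _ _ _ _ d => d.witnesses

theorem Deriv.length_witnesses_le_size {Γ Δ : List Fm} (d : Deriv Γ Δ) :
    d.witnesses.length ≤ d.size := by
  induction d <;> simp only [witnesses, size, List.length_append, List.length_cons,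
    List.length_nil] <;> omega

section Soundness

variable {v : ℕ → Tms → Prop} {U : Set Tm} {Γ Δ : List Fm}

theorem HoldsSeq.allL {A : Fm} {t : Tm} (ht : t ∈ U) (h : HoldsSeq v U (inst0 A t :: Γ) Δ) :
    HoldsSeq v U (.all A :: Γ) Δ := by
  intro hΓ
  rw [List.forall_mem_cons, Holds] at hΓ
  exact h (List.forall_mem_cons.2 ⟨hΓ.1 t ht, hΓ.2⟩)

theorem HoldsSeq.exR {A : Fm} {t : Tm} (ht : t ∈ U) (h : HoldsSeq v U Γ (inst0 A t :: Δ)) :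
    HoldsSeq v U Γ (.ex A :: Δ) := by
  intro hΓ
  rw [List.exists_mem_cons_iff, Holds]
  exact ((List.exists_mem_cons_iff ..).1 (h hΓ)).imp_left fun hA => ⟨t, ht, hA⟩

theorem Deriv.holdsSeq (d : Deriv Γ Δ) (hd : d.strongs = []) (hU : ∀ t ∈ d.witnesses, t ∈ U) :
    HoldsSeq v U Γ Δ := by
  induction d with
  | allR | exL => cases hd
  | allL t A Γ Δ d ih =>
    rw [witnesses, List.forall_mem_cons] at hU
    exact .allL hU.1 (ih hd hU.2)
  | exR t A Γ Δ d ih =>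
    rw [witnesses, List.forall_mem_cons] at hU
    exact .exR hU.1 (ih hd hU.2)
  | permL Γ Γ' Δ hp d ih => exact fun hΓ => ih hd hU fun A hA => hΓ A (hp.subset hA)
  | permR Γ Δ Δ' hp d ih =>
    exact fun hΓ => (ih hd hU hΓ).imp fun A => And.imp_left (hp.subset ·)
  | _ =>
    simp only [strongs, List.append_eq_nil_iff, witnesses, List.mem_append, HoldsSeq,
      List.forall_mem_cons, List.exists_mem_cons_iff, or_imp, forall_and, or_and_right,
      exists_or, Holds] at *
    grind

theorem posW_subF_and_negW_subF (k : ℕ) (u : Tm) :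
    ∀ A : Fm, posW (subF k u A) = posW A ∧ negW (subF k u A) = negW A
  | .atom _ _ => ⟨rfl, rfl⟩
  | .and A B | .or A B | .imp A B => by
    simp only [subF, posW, negW, posW_subF_and_negW_subF k u A, posW_subF_and_negW_subF k u B,
      and_self]
  | .not A => by simp only [subF, posW, negW, posW_subF_and_negW_subF k u A, and_self]
  | .all A | .ex A => by
    simp only [subF, posW, negW, posW_subF_and_negW_subF (k + 1) (liftT 0 u) A, and_self]

theorem posW_inst0 (A : Fm) (t : Tm) : posW (inst0 A t) = posW A :=
  (posW_subF_and_negW_subF 0 t A).1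

theorem negW_inst0 (A : Fm) (t : Tm) : negW (inst0 A t) = negW A :=
  (posW_subF_and_negW_subF 0 t A).2

theorem Deriv.strongs_eq_nil (d : Deriv Γ Δ) (hd : d.cutFms = []) (hw : WeakSeq Γ Δ) :
    d.strongs = [] := by
  induction d with
  | permL Γ Γ' Δ hp d ih => exact ih hd ⟨fun A hA => hw.1 A (hp.subset hA), hw.2⟩
  | permR Γ Δ Δ' hp d ih => exact ih hd ⟨hw.1, fun A hA => hw.2 A (hp.subset hA)⟩
  | _ =>
    simp_all [strongs, cutFms, WeakSeq, posW, negW, posW_inst0, negW_inst0, or_imp, forall_and]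

end Soundness

/-! ### Towers of exponentials -/

mutual
theorem subT_liftT (k : ℕ) (u : Tm) : ∀ t : Tm, subT k u (liftT k t) = t
  | .bvar n => by
    rw [liftT]
    split_ifs with h
    · rw [subT, if_neg h.ne, if_pos h]
    · rw [subT, if_neg (by omega), if_neg (by omega), Nat.add_sub_cancel]
  | .fvar _ => rfl
  | .func f ts => by rw [liftT, subT, subTs_liftTs k u ts]
  | .eps A => by rw [liftT, subT, subF_liftF (k + 1) (liftT 0 u) A]
theorem subTs_liftTs (k : ℕ) (u : Tm) : ∀ ts : Tms, subTs k u (liftTs k ts) = ts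
  | .nil => rfl
  | .cons t ts => by rw [liftTs, subTs, subT_liftT k u t, subTs_liftTs k u ts]
theorem subF_liftF (k : ℕ) (u : Tm) : ∀ A : Fm, subF k u (liftF k A) = A
  | .atom p ts => by rw [liftF, subF, subTs_liftTs k u ts]
  | .and A B | .or A B | .imp A B => by rw [liftF, subF, subF_liftF k u A, subF_liftF k u B]
  | .not A => by rw [liftF, subF, subF_liftF k u A]
  | .all A | .ex A => by rw [liftF, subF, subF_liftF (k + 1) (liftT 0 u) A]
end

mutual
theorem liftT_liftT_of_le {i k : ℕ} (h : i ≤ k) :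
    ∀ t : Tm, liftT (k + 1) (liftT i t) = liftT i (liftT k t)
  | .bvar n => by
    simp only [liftT]
    split_ifs <;> simp only [liftT] <;> split_ifs <;> first | rfl | omega
  | .fvar _ => rfl
  | .func f ts => by simp only [liftT, liftTs_liftTs_of_le h ts]
  | .eps A => by simp only [liftT, liftF_liftF_of_le (Nat.succ_le_succ h) A]
theorem liftTs_liftTs_of_le {i k : ℕ} (h : i ≤ k) :
    ∀ ts : Tms, liftTs (k + 1) (liftTs i ts) = liftTs i (liftTs k ts)
  | .nil => rfl
  | .cons t ts => by simp only [liftTs, liftT_liftT_of_le h t, liftTs_liftTs_of_le h ts]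
theorem liftF_liftF_of_le {i k : ℕ} (h : i ≤ k) :
    ∀ A : Fm, liftF (k + 1) (liftF i A) = liftF i (liftF k A)
  | .atom p ts => by simp only [liftF, liftTs_liftTs_of_le h ts]
  | .and A B | .or A B | .imp A B => by
    simp only [liftF, liftF_liftF_of_le h A, liftF_liftF_of_le h B]
  | .not A => by simp only [liftF, liftF_liftF_of_le h A]
  | .all A | .ex A => by simp only [liftF, liftF_liftF_of_le (Nat.succ_le_succ h) A]
end

/-- The constant `0`. -/
def zero : Tm := .func 1 .nil

/-- The successor function. -/
def succ (t : Tm) : Tm := .func 0 (.cons t .nil)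

/-- The atomic formula `y + 2 ^ x = z`. -/
def addPow (y x z : Tm) : Fm := .atom 0 (.cons y (.cons x (.cons z .nil)))

/-- The tautology `p → p`, in the role of the truth constant that the language lacks. -/
def verum : Fm := .imp (.atom 1 .nil) (.atom 1 .nil)

/-- `∀ y, y + 2 ^ 0 = y + 1`. -/
def addPowZero : Fm := .all (addPow (.bvar 0) zero (succ (.bvar 0)))

/-- The matrix of `addPowSucc`; its free indices `3, 2, 1, 0` are `y, x, z, w`. -/
def addPowSuccMatrix : Fm :=
  .imp (addPow (.bvar 3) (.bvar 2) (.bvar 1)) <|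
    .imp (addPow (.bvar 1) (.bvar 2) (.bvar 0)) (addPow (.bvar 3) (succ (.bvar 2)) (.bvar 0))

/-- `∀ y x z w, y + 2 ^ x = z → z + 2 ^ x = w → y + 2 ^ (x + 1) = w`. -/
def addPowSucc : Fm := .all <| .all <| .all <| .all addPowSuccMatrix

/-- The recursion equations of `y + 2 ^ x`, in relational form. -/
def recursionEqs : List Fm := [addPowZero, addPowSucc]

/-- `tower j t` says that a tower of `j` exponentials with top `t` exists: there are
`x₀ = t`, `x₁ = 2 ^ x₀`, …, `x_j = 2 ^ x_{j-1}`. -/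
def tower : ℕ → Tm → Fm
  | 0, _ => verum
  | j + 1, t => .ex (.and (addPow zero (liftT 0 t) (.bvar 0)) (tower j (.bvar 0)))

theorem subF_tower (k j : ℕ) (u : Tm) :
    subF (k + 1) u (tower j (.bvar 0)) = tower j (.bvar 0) := by
  induction j generalizing k u with
  | zero => rfl
  | succ j ih => simp [tower, subF, ih, addPow, subTs, zero, subT, liftT]

theorem inst0_tower (j : ℕ) (t : Tm) : inst0 (tower j (.bvar 0)) t = tower j t := by
  cases j with
  | zero => rfl
  | succ j => simp [inst0, tower, subF, subF_tower, addPow, subTs, zero, subT, liftT]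

theorem inst0_tower_matrix (j : ℕ) (t u : Tm) :
    inst0 (.and (addPow zero (liftT 0 t) (.bvar 0)) (tower j (.bvar 0))) u =
      .and (addPow zero t u) (tower j u) := by
  rw [← inst0_tower j u]
  simp [inst0, subF, addPow, subTs, zero, subT, subT_liftT]

theorem szF_tower_le (j : ℕ) (t : Tm) : szF (tower j t) ≤ szT (liftT 0 t) + 6 * j + 3 := by
  induction j generalizing t with
  | zero => simp only [tower, verum, szF, szTs]; omega
  | succ j ih =>
    have := ih (.bvar 0)
    simp only [tower, szF, addPow, szTs, zero, szT, liftT, lt_irrefl, if_false] at this ⊢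
    omega

theorem seqSize_recursionEqs_singleton (A : Fm) : seqSize recursionEqs [A] = szF A + 25 := by
  simp [seqSize, recursionEqs, addPowZero, addPowSucc, addPowSuccMatrix, addPow, zero, succ, szF,
    szTs, szT]
  omega

theorem seqSize_recursionEqs_tower_le (j : ℕ) :
    seqSize recursionEqs [tower j zero] ≤ 6 * j + 29 := by
  have hsize : szF (tower j zero) ≤ 1 + 6 * j + 3 := szF_tower_le j zero
  rw [seqSize_recursionEqs_singleton]
  omega

theorem noEpsF_tower {t : Tm} (ht : noEpsT (liftT 0 t) = true) (j : ℕ) :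
    noEpsF (tower j t) = true := by
  induction j generalizing t with
  | zero => rfl
  | succ j ih =>
    simp [tower, noEpsF, addPow, noEpsTs, noEpsT, zero, ht, ih (t := .bvar 0) rfl]

theorem foSeq_recursionEqs_tower (j : ℕ) : FOSeq recursionEqs [tower j zero] :=
  ⟨by decide, List.forall_mem_singleton.2 (noEpsF_tower rfl j)⟩

theorem posW_tower (j : ℕ) (t : Tm) : posW (tower j t) = true := by
  induction j generalizing t with
  | zero => rfl
  | succ j ih => simp [tower, posW, addPow, ih]

theorem weakSeq_recursionEqs_tower (j : ℕ) (t : Tm) : WeakSeq recursionEqs [tower j t] :=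
  ⟨by decide, by simp [posW_tower]⟩

theorem iterExp_eq_iterate (k : ℕ) : iterExp k = (2 ^ ·)^[k] := by
  funext n
  induction k with
  | zero => rfl
  | succ k ih => rw [iterExp, ih, Function.iterate_succ_apply']

theorem iterExp_add (k l n : ℕ) : iterExp (k + l) n = iterExp k (iterExp l n) := by
  simp only [iterExp_eq_iterate, Function.iterate_add_apply]

theorem iterExp_strictMono (k : ℕ) : StrictMono (iterExp k) :=
  iterExp_eq_iterate k ▸ (pow_right_strictMono₀ one_lt_two).iterate k

theorem le_iterExp_zero (k : ℕ) : k ≤ iterExp k 0 := by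
  induction k with
  | zero => rfl
  | succ k ih => exact ih.trans_lt Nat.lt_two_pow_self

theorem exists_iterExp_lt_iterExp_zero (k : ℕ) : ∃ i, iterExp k i < iterExp i 0 := by
  refine ⟨k + (k + 3), ?_⟩
  rw [iterExp_add k (k + 3) 0]
  refine iterExp_strictMono k ?_
  calc k + (k + 3) < 2 ^ (k + 2) := by have := Nat.lt_two_pow_self (n := k); grind
    _ ≤ iterExp (k + 3) 0 := Nat.pow_le_pow_right two_pos (le_iterExp_zero (k + 2))

section GapModel

/-- The number of successor symbols in front of a term. -/
def value : Tm → ℕ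
  | .func 0 (.cons t .nil) => value t + 1
  | _ => 0

@[simp] theorem value_zero : value zero = 0 := rfl

@[simp] theorem value_succ (t : Tm) : value (succ t) = value t + 1 := rfl

/-- The standard interpretation of `addPow` on values, with the triples leading from `y ≤ m` to
`z > m` removed: nothing at most `m` can be added up to more than `m`. -/
def gapModel (m : ℕ) : ℕ → Tms → Prop
  | 0, .cons y (.cons x (.cons z .nil)) =>
    value y + 2 ^ value x = value z ∧ (value y ≤ m → value z ≤ m)
  | _, _ => True

variable {m : ℕ} {U : Set Tm}

@[simp] theorem holds_gapModel_addPow (y x z : Tm) : Holds (gapModel m) U (addPow y x z) ↔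
    value y + 2 ^ value x = value z ∧ (value y ≤ m → value z ≤ m) := by
  rw [addPow, Holds, gapModel]

theorem inst0_addPowZero (y : Tm) :
    inst0 (addPow (.bvar 0) zero (succ (.bvar 0))) y = addPow y zero (succ y) := by
  simp [inst0, addPow, subF, subTs, subT, zero, succ]

theorem subF_addPowSuccMatrix (y x z w : Tm) :
    subF 0 w (subF 1 (liftT 0 z) (subF 2 (liftT 0 (liftT 0 x))
      (subF 3 (liftT 0 (liftT 0 (liftT 0 y))) addPowSuccMatrix))) =
      .imp (addPow y x z) (.imp (addPow z x w) (addPow y (succ x) w)) := by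
  have lift_comm (k : ℕ) (t : Tm) : liftT 0 (liftT k t) = liftT (k + 1) (liftT 0 t) :=
    (liftT_liftT_of_le k.zero_le t).symm
  simp [addPowSuccMatrix, subF, addPow, subTs, subT, succ, lift_comm, subT_liftT]

theorem holds_gapModel_addPowZero (hU : ∀ t ∈ U, value t ≠ m) :
    Holds (gapModel m) U addPowZero := by
  rw [addPowZero, Holds]
  intro t ht
  have := hU t ht
  rw [inst0_addPowZero, holds_gapModel_addPow, value_zero, value_succ]
  omega

theorem holds_gapModel_addPowSucc : Holds (gapModel m) U addPowSucc := by
  simp only [addPowSucc, Holds, inst0, subF, Nat.reduceAdd, subF_addPowSuccMatrix,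
    holds_gapModel_addPow, value_succ, pow_succ]
  omega

theorem iterExp_value_le_of_holds_tower {j : ℕ} {t : Tm} (ht : value t ≤ m)
    (h : Holds (gapModel m) U (tower j t)) : iterExp j (value t) ≤ m := by
  induction j generalizing t with
  | zero => exact ht
  | succ j ih =>
    rw [tower, Holds] at h
    obtain ⟨u, -, hu⟩ := h
    rw [inst0_tower_matrix, Holds, holds_gapModel_addPow, value_zero, zero_add] at hu
    obtain ⟨⟨htu, hum⟩, hu⟩ := hu
    rw [iterExp_add j 1, iterExp, iterExp, htu]
    exact ih (hum m.zero_le) hu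

theorem exists_le_length_forall_ne {α : Type*} (f : α → ℕ) (l : List α) :
    ∃ m ≤ l.length, ∀ a ∈ l, f a ≠ m := by
  obtain ⟨m, hm, hml⟩ := Finset.exists_mem_notMem_of_card_lt_card
    (s := (l.map f).toFinset) (t := Finset.range (l.length + 1))
    (by simpa [Nat.lt_succ_iff] using (l.map f).toFinset_card_le)
  exact ⟨m, Finset.mem_range_succ_iff.1 hm, by simpa using hml⟩

theorem iterExp_zero_le_size {j : ℕ} (d : Deriv recursionEqs [tower j zero]) (hd : d.cutFms = []) :
    iterExp j 0 ≤ d.size := by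
  obtain ⟨m, hm, hU⟩ := exists_le_length_forall_ne value d.witnesses
  have hs : HoldsSeq (gapModel m) {t | t ∈ d.witnesses} recursionEqs [tower j zero] :=
    d.holdsSeq (d.strongs_eq_nil hd (weakSeq_recursionEqs_tower j zero)) fun _ => id
  have htower : Holds (gapModel m) {t | t ∈ d.witnesses} (tower j zero) := by
    simpa using hs (List.forall_mem_cons.2
      ⟨holds_gapModel_addPowZero hU, List.forall_mem_singleton.2 holds_gapModel_addPowSucc⟩)
  calc iterExp j 0 ≤ m := iterExp_value_le_of_holds_tower m.zero_le htower
    _ ≤ d.witnesses.length := hm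
    _ ≤ d.size := d.length_witnesses_le_size

end GapModel

/-! ### Derivations on sets of formulas -/

theorem mem_fvSeq {a : ℕ} {Γ Δ : List Fm} : a ∈ fvSeq Γ Δ ↔ ∃ A ∈ Γ ++ Δ, a ∈ fvF A := by
  rw [fvSeq]
  induction Γ ++ Δ <;> simp_all

theorem fvSeq_subset {Γ Γ' Δ Δ' : List Fm} (hΓ : Γ ⊆ Γ') (hΔ : Δ ⊆ Δ') :
    fvSeq Γ Δ ⊆ fvSeq Γ' Δ' := by
  intro a
  simp only [mem_fvSeq, List.mem_append]
  exact Exists.imp fun A => And.imp_left (Or.imp (hΓ ·) (hΔ ·))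

theorem exists_append_perm_of_subset_append {α : Type*} {l l₁ l₂ : List α} (h : l ⊆ l₁ ++ l₂) :
    ∃ l₁' ⊆ l₁, ∃ l₂' ⊆ l₂, (l₁' ++ l₂').Perm l := by
  classical
  exact ⟨l.filter (· ∈ l₁), by grind, l.filter fun a => !decide (a ∈ l₁), by grind,
    List.filter_append_perm _ _⟩

/-- `Γ ⊢ Δ` has a derivation of size at most `w`, where a surcharge of 3 is levied on every
formula occurrence of `Γ ⊢ Δ`: this is what it will cost to contract the occurrence away. -/
def Derivable (w : ℕ) (Γ Δ : List Fm) : Prop :=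
  ∃ d : Deriv Γ Δ, d.Std ∧ d.size + 3 * (Γ.length + Δ.length) ≤ w

namespace Derivable

variable {w : ℕ} {Γ Γ' Δ Δ' L : List Fm}

theorem permL (hΓ : Γ.Perm Γ') : Derivable w Γ Δ → Derivable (w + 1) Γ' Δ
  | ⟨d, hd, hw⟩ => ⟨.permL Γ Γ' Δ hΓ d, hd, by rw [Deriv.size, ← hΓ.length_eq]; omega⟩

theorem permR (hΔ : Δ.Perm Δ') : Derivable w Γ Δ → Derivable (w + 1) Γ Δ'
  | ⟨d, hd, hw⟩ => ⟨.permR Γ Δ Δ' hΔ d, hd, by rw [Deriv.size, ← hΔ.length_eq]; omega⟩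

theorem weakenL (h : Derivable w Γ Δ) : Derivable (w + 4 * L.length) (L ++ Γ) Δ := by
  induction L with
  | nil => exact h
  | cons A L ih =>
    obtain ⟨d, hd, hw⟩ := ih
    exact ⟨.wL A _ _ d, hd, by simp only [Deriv.size, List.cons_append, List.length_cons]; omega⟩

theorem weakenR (h : Derivable w Γ Δ) : Derivable (w + 4 * L.length) Γ (L ++ Δ) := by
  induction L with
  | nil => exact h
  | cons A L ih =>
    obtain ⟨d, hd, hw⟩ := ih
    exact ⟨.wR A _ _ d, hd, by simp only [Deriv.size, List.cons_append, List.length_cons]; omega⟩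

theorem contractL (hL : L ⊆ Γ) (h : Derivable w (L ++ Γ) Δ) : Derivable w Γ Δ := by
  classical
  induction L with
  | nil => exact h
  | cons A L ih =>
    obtain ⟨hA, hL⟩ := List.cons_subset.1 hL
    have hperm : (A :: (L ++ Γ)).Perm (A :: A :: (L ++ Γ).erase A) :=
      (List.perm_cons_erase (List.mem_append_right L hA)).cons A
    obtain ⟨d, hd, hw⟩ := h
    refine ih hL ⟨.permL _ _ _ (List.perm_cons_erase (List.mem_append_right L hA)).symm
      (.cL _ _ _ (.permL _ _ _ hperm d)), hd, ?_⟩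
    simp only [Deriv.size, List.cons_append, List.length_cons] at hw ⊢
    omega

theorem contractR (hL : L ⊆ Δ) (h : Derivable w Γ (L ++ Δ)) : Derivable w Γ Δ := by
  classical
  induction L with
  | nil => exact h
  | cons A L ih =>
    obtain ⟨hA, hL⟩ := List.cons_subset.1 hL
    have hperm : (A :: (L ++ Δ)).Perm (A :: A :: (L ++ Δ).erase A) :=
      (List.perm_cons_erase (List.mem_append_right L hA)).cons A
    obtain ⟨d, hd, hw⟩ := h
    refine ih hL ⟨.permR _ _ _ (List.perm_cons_erase (List.mem_append_right L hA)).symm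
      (.cR _ _ _ (.permR _ _ _ hperm d)), hd, ?_⟩
    simp only [Deriv.size, List.cons_append, List.length_cons] at hw ⊢
    omega

theorem collectL (hΓ' : Γ' ⊆ L ++ Γ) (h : Derivable w Γ' Δ) :
    ∃ Γ₁ ⊆ Γ, Derivable (w + (4 * L.length + 1)) (L ++ Γ₁) Δ := by
  obtain ⟨L', hL', Γ₁, hΓ₁, hperm⟩ := exists_append_perm_of_subset_append hΓ'
  refine ⟨Γ₁, hΓ₁, contractL (List.subset_append_of_subset_left Γ₁ hL') ?_⟩
  exact h.weakenL.permL ((hperm.symm.append_left L).trans (List.perm_append_comm_assoc L L' Γ₁))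

theorem collectR (hΔ' : Δ' ⊆ L ++ Δ) (h : Derivable w Γ Δ') :
    ∃ Δ₁ ⊆ Δ, Derivable (w + (4 * L.length + 1)) Γ (L ++ Δ₁) := by
  obtain ⟨L', hL', Δ₁, hΔ₁, hperm⟩ := exists_append_perm_of_subset_append hΔ'
  refine ⟨Δ₁, hΔ₁, contractR (List.subset_append_of_subset_left Δ₁ hL') ?_⟩
  exact h.weakenR.permR ((hperm.symm.append_left L).trans (List.perm_append_comm_assoc L L' Δ₁))

end Derivable

/-- `Γ ⊢ Δ` is derivable in `n` steps of the sequent calculus on sets of formulas, where weakening,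
exchange and contraction are free and the rules are those below. A budget of eight LK inferences
per step covers the structural rules. -/
def Provable (n : ℕ) (Γ Δ : List Fm) : Prop :=
  ∃ Γ₀ ⊆ Γ, ∃ Δ₀ ⊆ Δ, Derivable (8 * n) Γ₀ Δ₀

namespace Provable

variable {n m : ℕ} {A B : Fm} {Γ Γ' Δ Δ' : List Fm}

theorem mono (hΓ : Γ ⊆ Γ') (hΔ : Δ ⊆ Δ') : Provable n Γ Δ → Provable n Γ' Δ'
  | ⟨Γ₀, hΓ₀, Δ₀, hΔ₀, h⟩ => ⟨Γ₀, List.Subset.trans hΓ₀ hΓ, Δ₀, List.Subset.trans hΔ₀ hΔ, h⟩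

theorem of_le (hnm : n ≤ m) : Provable n Γ Δ → Provable m Γ Δ
  | ⟨Γ₀, hΓ₀, Δ₀, hΔ₀, d, hd, hw⟩ => ⟨Γ₀, hΓ₀, Δ₀, hΔ₀, d, hd, by omega⟩

theorem exists_deriv (h : Provable n Γ Δ) :
    ∃ d : Deriv Γ Δ, d.Std ∧ d.size ≤ 8 * n + (Γ.length + Δ.length + 2) := by
  obtain ⟨Γ₀, hΓ₀, Δ₀, hΔ₀, h⟩ := h
  obtain ⟨d, hd, hw⟩ := (((h.weakenL (L := Γ)).permL List.perm_append_comm).contractL hΓ₀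
    |>.weakenR (L := Δ) |>.permR List.perm_append_comm).contractR hΔ₀
  exact ⟨d, hd, by omega⟩

theorem exists_derivable_consL (h : Provable n (A :: Γ) Δ) :
    ∃ Γ₁ ⊆ Γ, ∃ Δ₁ ⊆ Δ, Derivable (8 * n + 5) (A :: Γ₁) Δ₁ := by
  obtain ⟨Γ₀, hΓ₀, Δ₀, hΔ₀, h⟩ := h
  obtain ⟨Γ₁, hΓ₁, h⟩ := h.collectL (L := [A]) hΓ₀
  exact ⟨Γ₁, hΓ₁, Δ₀, hΔ₀, h⟩

theorem exists_derivable_consR (h : Provable n Γ (A :: Δ)) :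
    ∃ Γ₁ ⊆ Γ, ∃ Δ₁ ⊆ Δ, Derivable (8 * n + 5) Γ₁ (A :: Δ₁) := by
  obtain ⟨Γ₀, hΓ₀, Δ₀, hΔ₀, h⟩ := h
  obtain ⟨Δ₁, hΔ₁, h⟩ := h.collectR (L := [A]) hΔ₀
  exact ⟨Γ₀, hΓ₀, Δ₁, hΔ₁, h⟩

theorem ax (hΓ : A ∈ Γ) (hΔ : A ∈ Δ) : Provable 1 Γ Δ :=
  ⟨[A], by simpa using hΓ, [A], by simpa using hΔ, .ax A, trivial, by simp [Deriv.size]⟩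

theorem andL (hAB : .and A B ∈ Γ) (h : Provable n (A :: B :: Γ) Δ) : Provable (n + 1) Γ Δ := by
  obtain ⟨Γ₀, hΓ₀, Δ₀, hΔ₀, h⟩ := h
  obtain ⟨Γ₁, hΓ₁, d, hd, hw⟩ := h.collectL (L := [A, B]) hΓ₀
  refine ⟨_, List.cons_subset.2 ⟨hAB, hΓ₁⟩, Δ₀, hΔ₀, .andL A B Γ₁ Δ₀ d, hd, ?_⟩
  simp only [Deriv.size, List.length_append, List.length_cons, List.length_nil] at hw ⊢
  omega

theorem andR (h₁ : Provable n Γ (A :: Δ)) (h₂ : Provable m Γ (B :: Δ)) :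
    Provable (n + m + 1) Γ (.and A B :: Δ) := by
  obtain ⟨Γ₁, hΓ₁, Δ₁, hΔ₁, d₁, hd₁, hw₁⟩ := h₁.exists_derivable_consR
  obtain ⟨Γ₂, hΓ₂, Δ₂, hΔ₂, d₂, hd₂, hw₂⟩ := h₂.exists_derivable_consR
  refine ⟨_, List.append_subset.2 ⟨hΓ₁, hΓ₂⟩, _,
    List.cons_subset_cons _ (List.append_subset.2 ⟨hΔ₁, hΔ₂⟩),
    .andR A B Γ₁ Δ₁ Γ₂ Δ₂ d₁ d₂, ⟨hd₁, hd₂⟩, ?_⟩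
  simp only [Deriv.size, List.length_append, List.length_cons] at hw₁ hw₂ ⊢
  omega

theorem impL (hAB : .imp A B ∈ Γ) (h₁ : Provable n Γ (A :: Δ)) (h₂ : Provable m (B :: Γ) Δ) :
    Provable (n + m + 1) Γ Δ := by
  obtain ⟨Γ₁, hΓ₁, Δ₁, hΔ₁, d₁, hd₁, hw₁⟩ := h₁.exists_derivable_consR
  obtain ⟨Γ₂, hΓ₂, Δ₂, hΔ₂, d₂, hd₂, hw₂⟩ := h₂.exists_derivable_consL
  refine ⟨_, List.cons_subset.2 ⟨hAB, List.append_subset.2 ⟨hΓ₁, hΓ₂⟩⟩, _,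
    List.append_subset.2 ⟨hΔ₁, hΔ₂⟩, .impL A B Γ₁ Δ₁ Γ₂ Δ₂ d₁ d₂, ⟨hd₁, hd₂⟩, ?_⟩
  simp only [Deriv.size, List.length_append, List.length_cons] at hw₁ hw₂ ⊢
  omega

theorem impR (h : Provable n (A :: Γ) (B :: Δ)) : Provable (n + 1) Γ (.imp A B :: Δ) := by
  obtain ⟨Γ₁, hΓ₁, Δ₀, hΔ₀, h⟩ := h.exists_derivable_consL
  obtain ⟨Δ₁, hΔ₁, d, hd, hw⟩ := h.collectR (L := [B]) hΔ₀
  refine ⟨Γ₁, hΓ₁, _, List.cons_subset_cons _ hΔ₁, .impR A B Γ₁ Δ₁ d, hd, ?_⟩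
  simp only [Deriv.size, List.length_append, List.length_cons, List.length_nil] at hw ⊢
  omega

theorem cut (h₁ : Provable n Γ (A :: Δ)) (h₂ : Provable m (A :: Γ) Δ) :
    Provable (n + m + 1) Γ Δ := by
  obtain ⟨Γ₁, hΓ₁, Δ₁, hΔ₁, d₁, hd₁, hw₁⟩ := h₁.exists_derivable_consR
  obtain ⟨Γ₂, hΓ₂, Δ₂, hΔ₂, d₂, hd₂, hw₂⟩ := h₂.exists_derivable_consL
  refine ⟨_, List.append_subset.2 ⟨hΓ₁, hΓ₂⟩, _, List.append_subset.2 ⟨hΔ₁, hΔ₂⟩,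
    .cut A Γ₁ Δ₁ Γ₂ Δ₂ d₁ d₂, ⟨hd₁, hd₂⟩, ?_⟩
  simp only [Deriv.size, List.length_append, List.length_cons] at hw₁ hw₂ ⊢
  omega

theorem allL (hA : .all A ∈ Γ) (t : Tm) (h : Provable n (inst0 A t :: Γ) Δ) :
    Provable (n + 1) Γ Δ := by
  obtain ⟨Γ₁, hΓ₁, Δ₁, hΔ₁, d, hd, hw⟩ := h.exists_derivable_consL
  refine ⟨_, List.cons_subset.2 ⟨hA, hΓ₁⟩, Δ₁, hΔ₁, .allL t A Γ₁ Δ₁ d, hd, ?_⟩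
  simp only [Deriv.size, List.length_cons] at hw ⊢
  omega

theorem exR (t : Tm) (h : Provable n Γ (inst0 A t :: Δ)) : Provable (n + 1) Γ (.ex A :: Δ) := by
  obtain ⟨Γ₁, hΓ₁, Δ₁, hΔ₁, d, hd, hw⟩ := h.exists_derivable_consR
  refine ⟨Γ₁, hΓ₁, _, List.cons_subset_cons _ hΔ₁, .exR t A Γ₁ Δ₁ d, hd, ?_⟩
  simp only [Deriv.size, List.length_cons] at hw ⊢
  omega

/-- A premise that holds for every eigenvariable can be used at a fresh one, so no eigenvariable
condition has to be checked. -/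
theorem allR (h : ∀ a, Provable n Γ (inst0 A (.fvar a) :: Δ)) :
    Provable (n + 1) Γ (.all A :: Δ) := by
  obtain ⟨a, ha⟩ := Infinite.exists_notMem_finset (fvSeq Γ (.all A :: Δ)).toFinset
  obtain ⟨Γ₁, hΓ₁, Δ₁, hΔ₁, d, hd, hw⟩ := (h a).exists_derivable_consR
  have hΔ : .all A :: Δ₁ ⊆ .all A :: Δ := List.cons_subset_cons _ hΔ₁
  refine ⟨Γ₁, hΓ₁, _, hΔ, .allR a A Γ₁ Δ₁ d, ⟨?_, hd⟩, ?_⟩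
  · exact fun hmem => ha (List.mem_toFinset.2 (fvSeq_subset hΓ₁ hΔ hmem))
  · simp only [Deriv.size, List.length_cons] at hw ⊢
    omega

theorem exL (hA : .ex A ∈ Γ) (h : ∀ a, Provable n (inst0 A (.fvar a) :: Γ) Δ) :
    Provable (n + 1) Γ Δ := by
  obtain ⟨a, ha⟩ := Infinite.exists_notMem_finset (fvSeq Γ Δ).toFinset
  obtain ⟨Γ₁, hΓ₁, Δ₁, hΔ₁, d, hd, hw⟩ := (h a).exists_derivable_consL
  have hΓ : .ex A :: Γ₁ ⊆ Γ := List.cons_subset.2 ⟨hA, hΓ₁⟩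
  refine ⟨_, hΓ, Δ₁, hΔ₁, .exL a A Γ₁ Δ₁ d, ⟨?_, hd⟩, ?_⟩
  · exact fun hmem => ha (List.mem_toFinset.2 (fvSeq_subset hΓ hΔ₁ hmem))
  · simp only [Deriv.size, List.length_cons] at hw ⊢
    omega

end Provable

/-! ### Short proofs with cuts -/

/-- `∃ z, A(z) ∧ x + 2 ^ y = z`, where index `0` of `A` stands for `z`. -/
def step (A : Fm) (x y : Tm) : Fm :=
  .ex (.and A (addPow (liftT 0 x) (liftT 0 y) (.bvar 0)))

/-- Solovay's initial segments: the elements of `segment (i + 1)` are the `y` such that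
`segment i` is closed under `x ↦ x + 2 ^ y`. -/
def segment : ℕ → Tm → Fm
  | 0, _ => verum
  | i + 1, y =>
    .all (.imp (segment i (.bvar 0)) (step (segment i (.bvar 0)) (.bvar 0) (liftT 0 y)))

theorem subF_segment (k i : ℕ) (u : Tm) :
    subF (k + 1) u (segment i (.bvar 0)) = segment i (.bvar 0) := by
  induction i generalizing k u with
  | zero => rfl
  | succ i ih => simp [segment, step, subF, ih, addPow, subTs, subT, liftT]

theorem inst0_segment (i : ℕ) (t : Tm) : inst0 (segment i (.bvar 0)) t = segment i t := by
  cases i with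
  | zero => rfl
  | succ i => simp [inst0, segment, step, subF, subF_segment, addPow, subTs, subT, liftT]

theorem inst0_segment_matrix (i : ℕ) (x y : Tm) :
    inst0 (.imp (segment i (.bvar 0)) (step (segment i (.bvar 0)) (.bvar 0) (liftT 0 y))) x =
      .imp (segment i x) (step (segment i (.bvar 0)) x y) := by
  rw [← inst0_segment i x]
  simp [inst0, subF, step, subF_segment, addPow, subTs, subT, liftT,
    ← liftT_liftT_of_le le_rfl y, subT_liftT]

theorem inst0_step_matrix (i : ℕ) (x y z : Tm) :
    inst0 (.and (segment i (.bvar 0)) (addPow (liftT 0 x) (liftT 0 y) (.bvar 0))) z =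
      .and (segment i z) (addPow x y z) := by
  rw [← inst0_segment i z]
  simp [inst0, subF, addPow, subTs, subT, subT_liftT]

namespace Provable

variable {i n m : ℕ} {t x y z w : Tm} {Γ Δ : List Fm}

theorem verum : Provable 2 Γ (verum :: Δ) :=
  impR (ax (List.mem_cons_self ..) (List.mem_cons_self ..))

theorem addPow_zero (h : addPowZero ∈ Γ) (y : Tm) :
    Provable 2 Γ (addPow y zero (succ y) :: Δ) := by
  refine allL h y (ax (A := addPow y zero (succ y)) ?_ List.mem_cons_self)
  rw [inst0_addPowZero]
  exact List.mem_cons_self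

theorem addPow_succ (h : addPowSucc ∈ Γ) (hz : addPow y x z ∈ Γ) (hw : addPow z x w ∈ Γ) :
    Provable 9 Γ (addPow y (succ x) w :: Δ) := by
  have himp : Provable 5 (.imp (addPow y x z) (.imp (addPow z x w) (addPow y (succ x) w)) :: Γ)
      (addPow y (succ x) w :: Δ) :=
    impL List.mem_cons_self (ax (List.mem_cons_of_mem _ hz) List.mem_cons_self)
      (impL List.mem_cons_self (ax (by simp [hw]) List.mem_cons_self)
        (ax List.mem_cons_self List.mem_cons_self))
  refine allL h y (allL List.mem_cons_self x (allL List.mem_cons_self z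
    (allL List.mem_cons_self w (himp.mono ?_ (List.Subset.refl _)))))
  simp only [inst0, subF, Nat.reduceAdd, subF_addPowSuccMatrix]
  exact List.cons_subset_cons _ fun A hA => by simp [hA]

theorem stepR (hz : Provable n Γ (segment i z :: Δ)) (hxyz : Provable m Γ (addPow x y z :: Δ)) :
    Provable (n + m + 2) Γ (step (segment i (.bvar 0)) x y :: Δ) := by
  refine exR z ?_
  rw [inst0_step_matrix]
  exact hz.andR hxyz

theorem segmentL (hy : segment (i + 1) y ∈ Γ) (hx : segment i x ∈ Γ)
    (h : ∀ z, Provable n (segment i z :: addPow x y z :: Γ) Δ) : Provable (n + 5) Γ Δ := by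
  have hstep : Provable (n + 2) (step (segment i (.bvar 0)) x y :: Γ) Δ := by
    refine exL List.mem_cons_self fun a => ?_
    rw [inst0_step_matrix]
    refine andL List.mem_cons_self ((h (.fvar a)).mono ?_ (List.Subset.refl _))
    exact List.cons_subset_cons _ (List.cons_subset_cons _ fun A hA => by simp [hA])
  have himp : Provable (n + 4) (.imp (segment i x) (step (segment i (.bvar 0)) x y) :: Γ) Δ :=
    (impL List.mem_cons_self (ax (List.mem_cons_of_mem _ hx) List.mem_cons_self)
      (hstep.mono (List.cons_subset_cons _ (List.subset_cons_self ..))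
        (List.Subset.refl _))).of_le (by omega)
  refine allL hy x ?_
  rwa [inst0_segment_matrix]

theorem segmentR (h : ∀ x, Provable n (segment i x :: Γ) (step (segment i (.bvar 0)) x y :: Δ)) :
    Provable (n + 2) Γ (segment (i + 1) y :: Δ) := by
  refine allR fun a => ?_
  rw [inst0_segment_matrix]
  exact impR (h _)

theorem segment_succ (h : addPowSucc ∈ Γ) (ht : segment i t ∈ Γ) :
    Provable 24 Γ (segment i (succ t) :: Δ) := by
  cases i with
  | zero => exact verum.of_le (by norm_num)
  | succ i =>
    refine segmentR fun x => segmentL (i := i) (y := t) (x := x) (by simp [ht]) (by simp) fun z =>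
      segmentL (i := i) (y := t) (x := z) (by simp [ht]) (by simp) fun w =>
        stepR (n := 1) (m := 9) (z := w) ?_ ?_
    · exact ax List.mem_cons_self List.mem_cons_self
    · exact addPow_succ (z := z) (by simp [h]) (by simp) (by simp)

theorem segment_zero (h : recursionEqs ⊆ Γ) : Provable 30 Γ (segment i zero :: Δ) := by
  obtain ⟨hzero, hsucc⟩ : addPowZero ∈ Γ ∧ addPowSucc ∈ Γ := by
    simpa [recursionEqs] using h
  cases i with
  | zero => exact verum.of_le (by norm_num)
  | succ i =>
    refine segmentR fun x => stepR (n := 24) (m := 2) (z := succ x) ?_ ?_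
    · exact segment_succ (List.mem_cons_of_mem _ hsucc) List.mem_cons_self
    · exact addPow_zero (List.mem_cons_of_mem _ hzero) x

theorem tower_of_segment (h : recursionEqs ⊆ Γ) (ht : segment i t ∈ Γ) :
    Provable (39 * i + 2) Γ (tower i t :: Δ) := by
  induction i generalizing t Γ Δ with
  | zero => exact verum
  | succ i ih =>
    have hex : Provable (39 * i + 10) (segment i zero :: Γ) (tower (i + 1) t :: Δ) := by
      refine segmentL (y := t) (List.mem_cons_of_mem _ ht) List.mem_cons_self fun z => exR z ?_
      rw [inst0_tower_matrix]
      refine ((ax (by simp) List.mem_cons_self).andR (ih ?_ List.mem_cons_self)).of_le (by omega)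
      exact fun A hA => by simp [h hA]
    exact ((segment_zero h).cut hex).of_le (by omega)

theorem tower_zero (h : recursionEqs ⊆ Γ) (i : ℕ) : Provable (39 * i + 33) Γ (tower i zero :: Δ) :=
  ((segment_zero h).cut (tower_of_segment (List.subset_cons_of_subset _ h)
    List.mem_cons_self)).of_le (by omega)

end Provable

/-- Statman/Orevkov. There is a family of first-order
sequents `S i` together with LK-proofs of them such that: (1) the size of `S i`
is polynomially bounded in `i`; (2) no elementary function of `i` bounds the
size of the smallest cut-free LK-proofs of `S i`; (3) the given LK-proofs
(with cuts) have size polynomially bounded in `i`. -/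
theorem statman_orevkov :
    ∃ S : ℕ → List Fm × List Fm,
      (∀ i, FOSeq (S i).1 (S i).2) ∧
      -- (1) the size of S_i is polynomial in i
      (∃ p : Polynomial ℕ, ∀ i, seqSize (S i).1 (S i).2 ≤ p.eval i) ∧
      -- (2) no elementary bound on the smallest cut-free LK-proofs
      (∀ f : ℕ → ℕ, IsElementary f →
        ¬ ∀ i, ∃ d : Deriv (S i).1 (S i).2,
            d.Std ∧ d.cutFms = [] ∧ d.size ≤ f i) ∧
      -- (3) there are LK-proofs with cuts of polynomial size
      (∃ q : Polynomial ℕ, ∀ i, ∃ d : Deriv (S i).1 (S i).2,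
          d.Std ∧ d.size ≤ q.eval i) := by
  refine ⟨fun i => (recursionEqs, [tower i zero]), foSeq_recursionEqs_tower,
    ⟨6 * .X + 29, fun i => ?_⟩, ?_, ⟨312 * .X + 269, fun i => ?_⟩⟩
  · simpa using seqSize_recursionEqs_tower_le i
  · rintro f ⟨k, hf⟩ h
    obtain ⟨i, hi⟩ := exists_iterExp_lt_iterExp_zero k
    obtain ⟨d, -, hd, hsize⟩ := h i
    exact hi.not_ge ((iterExp_zero_le_size d hd).trans (hsize.trans (hf i)))
  · obtain ⟨d, hd, hsize⟩ :=
      (Provable.tower_zero (Δ := []) (List.Subset.refl recursionEqs) i).exists_deriv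
    refine ⟨d, hd, hsize.trans_eq ?_⟩
    simp [recursionEqs]
    omega

end EpsCalc
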